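/- Every planar graph G has a set X of vertices with |X| < |V(G)|/2 such that G is L-colourable for every list assignment L giving each vertex of X five permissible colours and each other vertex four permissible colours. -/

import Mathlib

open MvPolynomial Finset

/- The graph polynomial `P_G = ∏_{uv ∈ E(G), u < v} (x_v - x_u)`. -/
open scoped Classical in
noncomputable def graphPoly {V : Type*} [Fintype V] [LinearOrder V]
    (G : SimpleGraph V) : MvPolynomial V ℝ :=
  ∏ p ∈ Finset.univ.filter (fun p : V × V => G.Adj p.1 p.2 ∧ p.1 < p.2),
    (X p.2 - X p.1)

/- The signed graph polynomial `P_{G,σ} = ∏_{uv ∈ E(G), u < v} (x_v - σ(uv)·x_u)`. -/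
open scoped Classical in
noncomputable def signedGraphPoly {V : Type*} [Fintype V] [LinearOrder V]
    (G : SimpleGraph V) (σ : Sym2 V → ℤ) : MvPolynomial V ℤ :=
  ∏ p ∈ Finset.univ.filter (fun p : V × V => G.Adj p.1 p.2 ∧ p.1 < p.2),
    (X p.2 - C (σ s(p.1, p.2)) * X p.1)

/- `H` is a minor of `G`: branch sets. -/
def SimpleGraph.IsMinor {W V : Type*} (H : SimpleGraph W) (G : SimpleGraph V) : Prop :=
  ∃ f : W → Set V,
    (∀ w, (G.induce (f w)).Connected) ∧
    (∀ w₁ w₂, w₁ ≠ w₂ → Disjoint (f w₁) (f w₂)) ∧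
    (∀ w₁ w₂, H.Adj w₁ w₂ → ∃ v₁ ∈ f w₁, ∃ v₂ ∈ f w₂, G.Adj v₁ v₂)

/- A graph is planar iff it has no `K₅` and no `K₃,₃` minor (Wagner's theorem). -/
def SimpleGraph.IsPlanar {V : Type*} (G : SimpleGraph V) : Prop :=
  ¬ SimpleGraph.IsMinor (completeGraph (Fin 5)) G ∧
  ¬ SimpleGraph.IsMinor (completeBipartiteGraph (Fin 3) (Fin 3)) G


section Helpers

variable {V : Type*} {G : SimpleGraph V}

/-- `a` and `b` are joined by a walk of `G` inside `T`. -/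
def Linked (G : SimpleGraph V) (T : Finset V) (a b : V) : Prop :=
  ∃ q : G.Walk a b, ∀ c ∈ q.support, c ∈ T

lemma Linked.exists_set {T : Finset V} {p x : V} (h : Linked G T p x) (hpx : p ≠ x) :
    ∃ C : Set V, (∀ c ∈ C, c ∈ T) ∧ p ∉ C ∧ x ∉ C ∧
      ((C = ∅ ∧ G.Adj p x) ∨
        ((G.induce C).Connected ∧ (∃ c ∈ C, G.Adj p c) ∧ ∃ c ∈ C, G.Adj c x)) := by
  classical
  obtain ⟨q, hq⟩ := h
  have hq' : ∀ c ∈ q.bypass.support, c ∈ T := fun c hc => hq c (q.support_bypass_subset_support hc)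
  have hp : q.bypass.IsPath := q.bypass_isPath
  generalize q.bypass = r at hq' hp
  cases r with
  | nil => exact absurd rfl hpx
  | @cons _ p1 _ h r =>
    by_cases h1 : p1 = x
    · subst h1
      exact ⟨∅, by simp, by simp, by simp, Or.inl ⟨rfl, h⟩⟩
    · have hnil : ¬ r.Nil := SimpleGraph.Walk.not_nil_of_ne h1
      rw [SimpleGraph.Walk.cons_isPath_iff] at hp
      have hs := SimpleGraph.Walk.support_dropLast_concat hnil
      have hsub : ∀ c ∈ r.dropLast.support, c ∈ r.support := by
        intro c hc
        rw [← hs]; simp [hc]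
      refine ⟨{c | c ∈ r.dropLast.support}, ?_, ?_, ?_, Or.inr ⟨?_, ?_, ?_⟩⟩
      · intro c hc
        exact hq' c (by simp [hsub c hc])
      · intro hc
        exact hp.2 (hsub _ hc)
      · intro hc
        have hnd := hp.1.support_nodup
        rw [← hs] at hnd
        rw [List.nodup_append] at hnd
        exact hnd.2.2 x hc x (by simp) rfl
      · exact r.dropLast.connected_induce_support
      · exact ⟨p1, by simp, h⟩
      · exact ⟨r.penultimate, by simp, r.adj_penultimate hnil⟩

lemma connected_insert {C : Set V} {p x : V}
    (h : (C = ∅ ∧ G.Adj p x) ∨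
        ((G.induce C).Connected ∧ (∃ c ∈ C, G.Adj p c) ∧ ∃ c ∈ C, G.Adj c x)) :
    (G.induce (insert p C)).Connected ∧ ∃ c ∈ insert p C, G.Adj c x := by
  have hsing : (G.induce ({p} : Set V)).Connected := by
    simp
  rcases h with ⟨rfl, h⟩ | ⟨h1, ⟨c, hc, hpc⟩, d, hd, hdx⟩
  · exact ⟨by rw [insert_empty_eq]; exact hsing, p, by simp, h⟩
  · refine ⟨?_, d, by simp [hd], hdx⟩
    have := SimpleGraph.connected_induce_union hsing.preconnected h1.preconnected
      (Set.mem_singleton p) hc hpc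
    rwa [← Set.insert_eq] at this

/-- A claw inside gives a `K₃,₃` minor. -/
lemma minor_K33 {A T : Set V} {v p x y : V} (hA : (G.induce A).Connected)
    (hT : (G.induce T).Connected) (hAT : Disjoint A T)
    (hvA : v ∉ A) (hvT : v ∉ T) (hpA : p ∉ A) (hpT : p ∉ T) (hxA : x ∉ A) (hxT : x ∉ T)
    (hyA : y ∉ A) (hyT : y ∉ T) (hpx : p ≠ x) (hpy : p ≠ y) (hxy : x ≠ y)
    (hvp : G.Adj v p) (hvx : G.Adj v x) (hvy : G.Adj v y)
    (hAp : ∃ a ∈ A, G.Adj a p) (hAx : ∃ a ∈ A, G.Adj a x) (hAy : ∃ a ∈ A, G.Adj a y)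
    (hTp : ∃ a ∈ T, G.Adj a p) (hTx : ∃ a ∈ T, G.Adj a x) (hTy : ∃ a ∈ T, G.Adj a y) :
    SimpleGraph.IsMinor (completeBipartiteGraph (Fin 3) (Fin 3)) G := by
  have hsing : ∀ p, (G.induce ({p} : Set V)).Connected := by
    intro p
    simp
  have hkey : ∀ i j : Fin 3, ∃ v₁ ∈ (![A, {v}, T] : Fin 3 → Set V) i,
      ∃ v₂ ∈ (![{p}, {x}, {y}] : Fin 3 → Set V) j, G.Adj v₁ v₂ := by
    intro i j
    fin_cases i <;> fin_cases j <;> simp <;> assumption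
  refine ⟨Sum.elim ![A, {v}, T] ![{p}, {x}, {y}], ?_, ?_, ?_⟩
  · rintro (i | i)
    · fin_cases i
      · exact hA
      · exact hsing v
      · exact hT
    · fin_cases i <;> exact hsing _
  · have := hvp.ne
    have := hvx.ne
    have := hvy.ne
    have := hAT.symm
    rintro (i | i) (j | j) hij
    · fin_cases i <;> fin_cases j <;> first | exact absurd rfl hij | skip
      all_goals simp_all
    · fin_cases i <;> fin_cases j <;> simp_all
    · fin_cases i <;> fin_cases j <;> simp_all [eq_comm]
    · fin_cases i <;> fin_cases j <;> first | exact absurd rfl hij | skip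
      all_goals simp_all [eq_comm]
  · rintro (i | i) (j | j) hij
    · simp at hij
    · exact hkey i j
    · obtain ⟨a, ha, b, hb, hab⟩ := hkey j i
      exact ⟨b, hb, a, ha, hab.symm⟩
    · simp at hij

lemma minor_K5 {S : Fin 5 → Set V} (hc : ∀ i, (G.induce (S i)).Connected)
    (hd : ∀ i j, i < j → Disjoint (S i) (S j))
    (ha : ∀ i j, i < j → ∃ a ∈ S i, ∃ b ∈ S j, G.Adj a b) :
    SimpleGraph.IsMinor (SimpleGraph.completeGraph (Fin 5)) G := by
  refine ⟨S, hc, ?_, ?_⟩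
  · intro i j hij
    rcases lt_or_gt_of_ne hij with h | h
    · exact hd i j h
    · exact (hd j i h).symm
  · intro i j hij
    have hij : i ≠ j := hij
    rcases lt_or_gt_of_ne hij with h | h
    · exact ha i j h
    · obtain ⟨a, ha, b, hb, hab⟩ := ha j i h
      exact ⟨b, hb, a, ha, hab.symm⟩

/-- The key use of planarity. -/
lemma exists_not_linked [DecidableEq V] (hG : G.IsPlanar) {A : Set V} {W : Finset V}
    (hA : (G.induce A).Preconnected) (hAW : ∀ a ∈ A, a ∉ W) {v p x y : V}
    (hv : v ∈ W) (hp : p ∈ W) (hx : x ∈ W) (hy : y ∈ W)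
    (hpx : p ≠ x) (hpy : p ≠ y) (hxy : x ≠ y)
    (hvp : G.Adj v p) (hvx : G.Adj v x) (hvy : G.Adj v y)
    (hAv : ∃ a ∈ A, G.Adj a v)
    (hAp : ∃ a ∈ A, G.Adj a p) (hAx : ∃ a ∈ A, G.Adj a x) (hAy : ∃ a ∈ A, G.Adj a y)
    (h1 : Linked G ((W.erase v).erase y) p x) (h2 : Linked G ((W.erase v).erase p) x y)
    (h3 : Linked G ((W.erase v).erase x) y p) : False := by
  have hAc : (G.induce A).Connected := by
    obtain ⟨a, ha, -⟩ := hAv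
    have : Nonempty A := ⟨⟨a, ha⟩⟩
    exact ⟨hA⟩
  obtain ⟨C1, hC1, hp1, hx1, e1⟩ := h1.exists_set hpx
  obtain ⟨C2, hC2, hx2, hy2, e2⟩ := h2.exists_set hxy
  obtain ⟨C3, hC3, hy3, hp3, e3⟩ := h3.exists_set hpy.symm
  simp only [Finset.mem_erase] at hC1 hC2 hC3
  have hy1 : y ∉ C1 := fun h => (hC1 y h).1 rfl
  have hp2 : p ∉ C2 := fun h => (hC2 p h).1 rfl
  have hx3 : x ∉ C3 := fun h => (hC3 x h).1 rfl
  have hv1 : v ∉ C1 := fun h => (hC1 v h).2.1 rfl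
  have hv2 : v ∉ C2 := fun h => (hC2 v h).2.1 rfl
  have hv3 : v ∉ C3 := fun h => (hC3 v h).2.1 rfl
  have hA1 : Disjoint A C1 := Set.disjoint_left.2 fun a ha h => hAW a ha (hC1 a h).2.2
  have hA2 : Disjoint A C2 := Set.disjoint_left.2 fun a ha h => hAW a ha (hC2 a h).2.2
  have hA3 : Disjoint A C3 := Set.disjoint_left.2 fun a ha h => hAW a ha (hC3 a h).2.2
  have hvA : v ∉ A := fun h => hAW v h hv
  have hpA : p ∉ A := fun h => hAW p h hp
  have hxA : x ∉ A := fun h => hAW x h hx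
  have hyA : y ∉ A := fun h => hAW y h hy
  have key : ∀ {p x y : V} {C D : Set V},
      ((C = ∅ ∧ G.Adj p x) ∨
        ((G.induce C).Connected ∧ (∃ c ∈ C, G.Adj p c) ∧ ∃ c ∈ C, G.Adj c x)) →
      ((D = ∅ ∧ G.Adj x y) ∨
        ((G.induce D).Connected ∧ (∃ c ∈ D, G.Adj x c) ∧ ∃ c ∈ D, G.Adj c y)) →
      (C ∩ D).Nonempty → (G.induce (C ∪ D)).Connected ∧ (∃ c ∈ C ∪ D, G.Adj c p) ∧
        (∃ c ∈ C ∪ D, G.Adj c x) ∧ (∃ c ∈ C ∪ D, G.Adj c y) := by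
    intro p x y C D hC hD hCD
    rcases hC with ⟨rfl, -⟩ | ⟨hC, ⟨c, hc, hpc⟩, d, hd, hdx⟩
    · simp at hCD
    rcases hD with ⟨rfl, -⟩ | ⟨hD, ⟨c', hc', hpc'⟩, d', hd', hdx'⟩
    · simp at hCD
    exact ⟨SimpleGraph.induce_union_connected hC.preconnected hD.preconnected hCD,
      ⟨c, Or.inl hc, hpc.symm⟩, ⟨d, Or.inl hd, hdx⟩, ⟨d', Or.inr hd', hdx'⟩⟩
  by_cases i12 : (C1 ∩ C2).Nonempty
  · obtain ⟨k, kp, kx, ky⟩ := key e1 e2 i12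
    exact hG.2 (minor_K33 hAc k (by simp [hA1, hA2]) hvA (by simp [*]) hpA (by simp [*]) hxA
      (by simp [*]) hyA (by simp [*]) hpx hpy hxy hvp hvx hvy hAp hAx hAy kp kx ky)
  by_cases i23 : (C2 ∩ C3).Nonempty
  · obtain ⟨k, kx, ky, kp⟩ := key e2 e3 i23
    exact hG.2 (minor_K33 hAc k (by simp [hA3, hA2]) hvA (by simp [*]) hpA (by simp [*]) hxA
      (by simp [*]) hyA (by simp [*]) hpx hpy hxy hvp hvx hvy hAp hAx hAy kp kx ky)
  by_cases i31 : (C3 ∩ C1).Nonempty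
  · obtain ⟨k, ky, kp, kx⟩ := key e3 e1 i31
    exact hG.2 (minor_K33 hAc k (by simp [hA3, hA1]) hvA (by simp [*]) hpA (by simp [*]) hxA
      (by simp [*]) hyA (by simp [*]) hpx hpy hxy hvp hvx hvy hAp hAx hAy kp kx ky)
  rw [Set.not_nonempty_iff_eq_empty, ← Set.disjoint_iff_inter_eq_empty] at i12 i23 i31
  have n1 := hvp.ne
  have n2 := hvx.ne
  have n3 := hvy.ne
  obtain ⟨k1, a1⟩ := connected_insert e1
  obtain ⟨k2, a2⟩ := connected_insert e2
  obtain ⟨k3, a3⟩ := connected_insert e3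
  refine hG.1 (minor_K5 (S := ![A, {v}, insert p C1, insert x C2, insert y C3]) ?_ ?_ ?_)
  · intro i
    fin_cases i
    · exact hAc
    · simp
    · exact k1
    · exact k2
    · exact k3
  · intro i j hij
    fin_cases i <;> fin_cases j <;> first | exact absurd hij (by decide) | skip
    · exact Set.disjoint_singleton_right.2 hvA
    · exact Set.disjoint_insert_right.2 ⟨hpA, hA1⟩
    · exact Set.disjoint_insert_right.2 ⟨hxA, hA2⟩
    · exact Set.disjoint_insert_right.2 ⟨hyA, hA3⟩
    · simp [n1, hv1]
    · simp [n2, hv2]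
    · simp [n3, hv3]
    · simp [hpx.symm, hx1, hp2, i12]
    · simp [hpy.symm, hy1, hp3, i31.symm]
    · simp [hxy.symm, hy2, hx3, i23]
  · intro i j hij
    fin_cases i <;> fin_cases j <;> first | exact absurd hij (by decide) | skip
    · obtain ⟨a, ha, h⟩ := hAv
      exact ⟨a, ha, v, rfl, h⟩
    · obtain ⟨a, ha, h⟩ := hAp
      exact ⟨a, ha, p, Or.inl rfl, h⟩
    · obtain ⟨a, ha, h⟩ := hAx
      exact ⟨a, ha, x, Or.inl rfl, h⟩
    · obtain ⟨a, ha, h⟩ := hAy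
      exact ⟨a, ha, y, Or.inl rfl, h⟩
    · exact ⟨v, rfl, p, Or.inl rfl, hvp⟩
    · exact ⟨v, rfl, x, Or.inl rfl, hvx⟩
    · exact ⟨v, rfl, y, Or.inl rfl, hvy⟩
    · obtain ⟨a, ha, h⟩ := a1
      exact ⟨a, ha, x, Or.inl rfl, h⟩
    · obtain ⟨a, ha, h⟩ := a3
      exact ⟨p, Or.inl rfl, a, ha, h.symm⟩
    · obtain ⟨a, ha, h⟩ := a2
      exact ⟨a, ha, y, Or.inl rfl, h⟩

/-- If `a`, `b` are not linked in `T`, then `T` splits. -/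
lemma exists_split [DecidableEq V] {T : Finset V} {a b : V} (ha : a ∈ T) (hb : b ∈ T)
    (h : ¬ Linked G T a b) :
    ∃ C D : Finset V, Disjoint C D ∧ C ∪ D = T ∧ a ∈ C ∧ b ∈ D ∧
      ∀ c ∈ C, ∀ d ∈ D, ¬ G.Adj c d := by
  classical
  refine ⟨T.filter (Linked G T a), T.filter (fun c => ¬ Linked G T a c), ?_, ?_, ?_, ?_, ?_⟩
  · exact Finset.disjoint_filter_filter_not _ _ _
  · exact Finset.filter_union_filter_not_eq _ _
  · exact Finset.mem_filter.2 ⟨ha, SimpleGraph.Walk.nil, by simpa using ha⟩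
  · exact Finset.mem_filter.2 ⟨hb, h⟩
  · intro c hc d hd hcd
    rw [Finset.mem_filter] at hc hd
    obtain ⟨-, q, hq⟩ := hc
    refine hd.2 ⟨q.concat hcd, ?_⟩
    intro e he
    rw [SimpleGraph.Walk.support_concat] at he
    simp only [List.mem_append, List.mem_singleton] at he
    rcases he with he | rfl
    · exact hq e he
    · exact hd.1

end Helpers
section Poly

set_option linter.unusedSectionVars false

variable {V : Type*} [DecidableEq V]

/-- The factor of an edge, with an arbitrary sign. -/
noncomputable def fac (e : Sym2 V) : MvPolynomial V ℚ :=
  MvPolynomial.X e.out.1 - MvPolynomial.X e.out.2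

lemma fac_mk (a b : V) :
    fac s(a, b) = X a - X b ∨ fac s(a, b) = -(X a - X b) := by
  have h : s((Quot.out s(a, b)).1, (Quot.out s(a, b)).2) = s(a, b) := Quot.out_eq _
  rw [Sym2.eq_iff] at h
  unfold fac
  rcases h with ⟨h1, h2⟩ | ⟨h1, h2⟩
  · left; rw [h1, h2]
  · right; rw [h1, h2]; ring

lemma coeff_mul_fac_ne (F : MvPolynomial V ℚ) (a b : V) (n : V →₀ ℕ) :
    coeff n (F * fac s(a, b)) ≠ 0 ↔ coeff n (F * X a) - coeff n (F * X b) ≠ 0 := by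
  rcases fac_mk a b with h | h
  · rw [h, mul_sub, coeff_sub]
  · rw [h, mul_neg, coeff_neg, mul_sub, coeff_sub, neg_ne_zero]

/-- the exponent vector of a set -/
noncomputable def ind (U : Finset V) : V →₀ ℕ := ∑ u ∈ U, Finsupp.single u 1

lemma ind_apply (U : Finset V) (a : V) : ind U a = if a ∈ U then 1 else 0 := by
  simp [ind, Finsupp.finsetSum_apply, Finsupp.single_apply]

lemma coeff_mul_X_zero (F : MvPolynomial V ℚ) (a : V) (n : V →₀ ℕ) (h : n a = 0) :
    coeff n (F * X a) = 0 := by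
  rw [coeff_mul_X', if_neg (by simpa using h)]

/-- lowest coefficient in `x_v` -/
lemma coeff_star (F : MvPolynomial V ℚ) (v : V) (U : Finset V) (hU : v ∉ U) (n : V →₀ ℕ)
    (hn : n v = 0) :
    coeff (n + ind U) (F * ∏ u ∈ U, fac s(v, u)) ≠ 0 ↔ coeff n F ≠ 0 := by
  induction U using Finset.induction_on with
  | empty => simp [ind]
  | insert u U hu ih =>
    rw [Finset.mem_insert, not_or] at hU
    rw [Finset.prod_insert hu, mul_comm (fac _), ← mul_assoc, coeff_mul_fac_ne,
      coeff_mul_X_zero _ v, zero_sub, neg_ne_zero]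
    · have : n + ind (insert u U) = (n + ind U) + Finsupp.single u 1 := by
        unfold ind
        rw [Finset.sum_insert hu]; abel
      rw [this, coeff_mul_X]
      exact ih hU.2
    · simp [ind_apply, hn, hU]

/-- the dichotomy for the next coefficient in `x_v` -/
lemma coeff_star_two (F : MvPolynomial V ℚ) (v w : V) (U : Finset V) (hU : v ∉ U)
    (hw : w ≠ v) (n : V →₀ ℕ) (hn : n v = 0) (hF : ∀ k, coeff k F ≠ 0 → k v = 0)
    (hc : coeff n F ≠ 0) :
    coeff (n + ind U + Finsupp.single v 1) (F * fac s(v, w) * ∏ u ∈ U, fac s(v, u)) ≠ 0 ∨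
    ∃ u ∈ U, coeff (n + Finsupp.single u 1) (F * fac s(v, w)) ≠ 0 := by
  induction U using Finset.induction_on with
  | empty =>
    left
    simp only [ind, Finset.sum_empty, add_zero, Finset.prod_empty, mul_one]
    rw [coeff_mul_fac_ne, coeff_mul_X]
    have : coeff (n + Finsupp.single v 1) (F * X w) = 0 := by
      rw [coeff_mul_X']
      split_ifs with h
      · by_contra h'
        have := hF _ h'
        simp [hw] at this
      · rfl
    rwa [this, sub_zero]
  | insert u U hu ih =>
    rw [Finset.mem_insert, not_or] at hU
    by_cases h : coeff (n + Finsupp.single u 1) (F * fac s(v, w)) ≠ 0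
    · exact Or.inr ⟨u, by simp, h⟩
    rcases ih hU.2 with h1 | ⟨u', hu', h'⟩
    swap
    · exact Or.inr ⟨u', by simp [hu'], h'⟩
    left
    rw [Finset.prod_insert hu, mul_comm (fac s(v, u)), ← mul_assoc, coeff_mul_fac_ne]
    have e1 : n + ind (insert u U) + Finsupp.single v 1 =
        ((n + Finsupp.single u 1) + ind U) + Finsupp.single v 1 := by
      unfold ind
      rw [Finset.sum_insert hu]; abel
    have e2 : n + ind (insert u U) + Finsupp.single v 1 =
        (n + ind U + Finsupp.single v 1) + Finsupp.single u 1 := by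
      rw [e1]; abel
    rw [e2, coeff_mul_X, ← e2, e1, coeff_mul_X]
    have h0 := (coeff_star (F * fac s(v, w)) v U hU.2 (n + Finsupp.single u 1)
      (by simp [hn, Ne.symm hU.1])).not.2 h
    rw [not_not] at h0
    rw [h0, zero_sub, neg_ne_zero]
    exact h1

/-- product of the factors of a set of edges -/
noncomputable def ep (E : Finset (Sym2 V)) : MvPolynomial V ℚ := ∏ e ∈ E, fac e

lemma ep_homog (E : Finset (Sym2 V)) : (ep E).IsHomogeneous E.card := by
  have := MvPolynomial.IsHomogeneous.prod E (fac (V := V)) (fun _ => 1) (by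
    intro e _
    exact (isHomogeneous_X _ _).sub (isHomogeneous_X _ _))
  simpa [ep] using this

lemma ep_degree (E : Finset (Sym2 V)) {k : V →₀ ℕ} (h : coeff k (ep E) ≠ 0) :
    k.degree = E.card := by
  by_contra h'
  exact h ((ep_homog E).coeff_eq_zero h')

lemma ep_free (E : Finset (Sym2 V)) {v : V} (hv : ∀ e ∈ E, v ∉ e) {k : V →₀ ℕ}
    (h : coeff k (ep E) ≠ 0) : k v = 0 := by
  by_contra h'
  have h1 : v ∈ (ep E).vars := by
    rw [mem_vars_iff_mem_support]
    exact ⟨k, by simpa using h, by simpa using h'⟩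
  have h2 := vars_prod (s := E) (fac (V := V)) h1
  rw [Finset.mem_biUnion] at h2
  obtain ⟨e, he, hve⟩ := h2
  have h3 := vars_sub_subset _ hve
  simp only [vars_X, Finset.mem_union, Finset.mem_singleton] at h3
  apply hv e he
  have h : s((Quot.out e).1, (Quot.out e).2) = e := Quot.out_eq _
  rw [← h, Sym2.mem_iff]
  exact h3

/-- glueing two monomials -/
lemma coeff_glue (E1 E2 : Finset (Sym2 V)) (hE : Disjoint E1 E2) (m1 m2 : V →₀ ℕ)
    (h1 : coeff m1 (ep E1) ≠ 0) (h2 : coeff m2 (ep E2) ≠ 0)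
    (h : ∀ v, (∀ e ∈ E1, v ∉ e) ∨ (∀ e ∈ E2, v ∉ e) ∨ m2 v = 0) :
    coeff (m1 + m2) (ep (E1 ∪ E2)) ≠ 0 := by
  have : ep (E1 ∪ E2) = ep E1 * ep E2 := Finset.prod_union hE
  rw [this, coeff_mul, Finset.sum_eq_single (m1, m2)]
  · exact mul_ne_zero h1 h2
  · rintro ⟨a, b⟩ hab hne
    rw [Finset.HasAntidiagonal.mem_antidiagonal] at hab
    simp only at hab ⊢
    by_contra hc
    have ha : coeff a (ep E1) ≠ 0 := left_ne_zero_of_mul hc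
    have hb : coeff b (ep E2) ≠ 0 := right_ne_zero_of_mul hc
    have hle : a ≤ m1 := by
      intro v
      have hv := DFunLike.congr_fun hab v
      simp only [Finsupp.add_apply] at hv
      rcases h v with h | h | h
      · rw [ep_free E1 h ha]; omega
      · have := ep_free E2 h hb
        have := ep_free E2 h h2
        omega
      · omega
    have hd : a.degree = m1.degree := by rw [ep_degree _ ha, ep_degree _ h1]
    obtain ⟨c, rfl⟩ := exists_add_of_le hle
    have hc0 : c.degree = 0 := by
      rw [map_add] at hd; omega
    rw [Finsupp.degree_eq_zero_iff] at hc0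
    subst hc0
    apply hne
    simp only [add_zero] at hab ⊢
    rw [add_left_cancel hab]
  · intro h
    simp at h

end Poly
section Main

set_option linter.unusedSectionVars false

variable {V : Type*} [Fintype V] [DecidableEq V] (G : SimpleGraph V)

open scoped Classical in
/-- edges inside `W` but not inside `P` -/
noncomputable def Ed (W P : Finset V) : Finset (Sym2 V) :=
  Finset.univ.filter (fun e => e ∈ G.edgeSet ∧ (∀ x ∈ e, x ∈ W) ∧ ¬ ∀ x ∈ e, x ∈ P)

variable {G}

lemma mem_Ed {W P : Finset V} {a b : V} :
    s(a, b) ∈ Ed G W P ↔ G.Adj a b ∧ (a ∈ W ∧ b ∈ W) ∧ ¬ (a ∈ P ∧ b ∈ P) := by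
  simp [Ed]

lemma Ed_mem_W {W P : Finset V} {e : Sym2 V} (he : e ∈ Ed G W P) {v : V} (hv : v ∈ e) :
    v ∈ W := by
  simp only [Ed, Finset.mem_filter] at he
  exact he.2.2.1 v hv

variable (G)

open scoped Classical in
/-- the boundary determined by `A` -/
noncomputable def bd (A : Set V) (W : Finset V) : Finset V :=
  W.filter (fun u => ∃ a ∈ A, G.Adj a u)

open scoped Classical in
/-- neighbours of `v` via edges inside `W` but not inside `P` -/
noncomputable def nb (v : V) (W P : Finset V) : Finset V :=
  W.filter (fun u => G.Adj v u ∧ ¬ (v ∈ P ∧ u ∈ P))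

variable {G}

lemma mem_bd {A : Set V} {W : Finset V} {u : V} :
    u ∈ bd G A W ↔ u ∈ W ∧ ∃ a ∈ A, G.Adj a u := by simp [bd]

lemma mem_nb {v : V} {W P : Finset V} {u : V} :
    u ∈ nb G v W P ↔ u ∈ W ∧ G.Adj v u ∧ ¬ (v ∈ P ∧ u ∈ P) := by simp [nb]

lemma ep_split {v : V} {W P : Finset V} (hv : v ∈ W) :
    ep (Ed G W P) = ep (Ed G (W.erase v) (P.erase v)) * ∏ u ∈ nb G v W P, fac s(v, u) := by
  have h1 : Ed G W P = Ed G (W.erase v) (P.erase v) ∪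
      (nb G v W P).image (fun u => s(v, u)) := by
    ext e
    induction e using Sym2.ind with
    | _ a b =>
      rw [Finset.mem_union, mem_Ed, mem_Ed, Finset.mem_image]
      simp only [mem_nb, Finset.mem_erase]
      constructor
      · rintro ⟨hab, ⟨ha, hb⟩, hP⟩
        by_cases hav : a = v
        · subst hav
          exact Or.inr ⟨b, ⟨hb, hab, hP⟩, rfl⟩
        by_cases hbv : b = v
        · subst hbv
          exact Or.inr ⟨a, ⟨ha, hab.symm, fun h => hP h.symm⟩, Sym2.eq_swap⟩
        · exact Or.inl ⟨hab, ⟨⟨hav, ha⟩, hbv, hb⟩, fun h => hP ⟨h.1.2, h.2.2⟩⟩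
      · rintro (⟨hab, ⟨⟨hav, ha⟩, hbv, hb⟩, hP⟩ | ⟨u, ⟨hu, hvu, hP⟩, he⟩)
        · exact ⟨hab, ⟨ha, hb⟩, fun h => hP ⟨⟨hav, h.1⟩, hbv, h.2⟩⟩
        · rw [Sym2.eq_iff] at he
          rcases he with ⟨rfl, rfl⟩ | ⟨rfl, rfl⟩
          · exact ⟨hvu, ⟨hv, hu⟩, hP⟩
          · exact ⟨hvu.symm, ⟨hu, hv⟩, fun h => hP h.symm⟩
  have h2 : Disjoint (Ed G (W.erase v) (P.erase v)) ((nb G v W P).image (fun u => s(v, u))) := by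
    rw [Finset.disjoint_left]
    intro e he he'
    rw [Finset.mem_image] at he'
    obtain ⟨u, -, rfl⟩ := he'
    have := Ed_mem_W he (Sym2.mem_mk_left v u)
    simp at this
  rw [h1, ep, Finset.prod_union h2, Finset.prod_image]
  · rfl
  · intro a _ b _ hab
    exact Sym2.congr_right.1 hab

/-- The inductive statement. -/
def Good (G : SimpleGraph V) (W B P : Finset V) : Prop :=
  ∃ (S Y : Finset V) (m : V →₀ ℕ),
    S ⊆ W \ P ∧ Y ⊆ W \ P ∧ Disjoint S Y ∧ S.card ≤ Y.card ∧
    coeff m (ep (Ed G W P)) ≠ 0 ∧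
    (∀ v ∈ P, m v = 0) ∧ (∀ v, v ∉ W → m v = 0) ∧
    (∀ v ∈ B, v ∉ P → m v ≤ 2 ∧ (v ∈ Y → m v ≤ 1)) ∧
    (∀ v, m v ≤ 4 ∧ (v ∉ S → m v ≤ 3))

lemma good_delP {W B B' P : Finset V} {p : V} (hp : p ∈ P) (hPW : P ⊆ W)
    (hB' : ∀ u ∈ W, u ≠ p → (u ∈ B ∨ G.Adj p u) → u ∈ B')
    (hN : ∀ u ∈ B, G.Adj p u → u ∈ P) (hBW : B ⊆ W)
    (h : Good G (W.erase p) B' (P.erase p)) : Good G W B P := by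
  obtain ⟨S, Y, m, hS, hY, hSY, hc, hm, hm0, hmW, hmB, hmV⟩ := h
  have hmp : m p = 0 := hmW p (by simp)
  have hpU : p ∉ nb G p W P := by simp [mem_nb]
  have hUn : ∀ u ∈ nb G p W P, u ∈ W ∧ u ≠ p ∧ u ∉ P ∧ u ∉ B ∧ u ∈ B' := by
    intro u hu
    have hup : u ≠ p := fun h => hpU (h ▸ hu)
    rw [mem_nb] at hu
    have huP : u ∉ P := fun h => hu.2.2 ⟨hp, h⟩
    exact ⟨hu.1, hup, huP, fun h => huP (hN u h hu.2.1), hB' u hu.1 hup (Or.inr hu.2.1)⟩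
  refine ⟨S, Y, m + ind (nb G p W P), ?_, ?_, hSY, hc, ?_, ?_, ?_, ?_, ?_⟩
  · intro u hu
    have := hS hu
    simp only [Finset.mem_sdiff, Finset.mem_erase] at this ⊢
    tauto
  · intro u hu
    have := hY hu
    simp only [Finset.mem_sdiff, Finset.mem_erase] at this ⊢
    tauto
  · rw [ep_split (hPW hp), coeff_star _ _ _ hpU _ hmp]
    exact hm
  · intro u hu
    rw [Finsupp.add_apply, ind_apply, if_neg (fun h => (hUn u h).2.2.1 hu)]
    by_cases hup : u = p
    · simp [hup, hmp]
    · simp [hm0 u (by simp [hu, hup])]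
  · intro u hu
    rw [Finsupp.add_apply, ind_apply, if_neg (fun h => hu (hUn u h).1), hmW u (by simp [hu])]
  · intro u hu huP
    rw [Finsupp.add_apply, ind_apply, if_neg (fun h => (hUn u h).2.2.2.1 hu)]
    have hup : u ≠ p := fun h => huP (h ▸ hp)
    exact hmB u (hB' u (hBW hu) hup (Or.inl hu)) (by simp [huP])
  · intro u
    rw [Finsupp.add_apply, ind_apply]
    split_ifs with hu
    · have h1 := hUn u hu
      have := (hmB u h1.2.2.2.2 (by simp [h1.2.2.1])).1
      omega
    · exact hmV u

lemma good_delV {W B B' P : Finset V} {v p : V} (hp : p ∈ P) (hPB : P ⊆ B) (hBW : B ⊆ W)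
    (hvB : v ∈ B) (hvP : v ∉ P) (hvp : G.Adj v p)
    (hB' : ∀ u ∈ W, u ≠ v → (u ∈ B ∨ G.Adj v u) → u ∈ B')
    (hN : ∀ x ∈ B, ∀ y ∈ B, G.Adj v x → G.Adj v y → x ≠ p → y ≠ p → x = y)
    (h : Good G (W.erase v) B' P) : Good G W B P := by
  obtain ⟨S, Y, m, hS, hY, hSY, hc, hm, hm0, hmW, hmB, hmV⟩ := h
  have hvW := hBW hvB
  have hpB := hPB hp
  have hmv : m v = 0 := hmW v (by simp)
  have hPv : P.erase v = P := Finset.erase_eq_of_notMem hvP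
  obtain ⟨U, hUdef⟩ : ∃ U, U = nb G v W P \ B := ⟨_, rfl⟩
  have hU : ∀ u, u ∈ U ↔ u ∈ W ∧ G.Adj v u ∧ u ∉ B := by
    intro u
    rw [hUdef, Finset.mem_sdiff, mem_nb]
    tauto
  have hvU : v ∉ U := fun h => ((hU v).1 h).2.2 hvB
  have hpU : p ∉ U := fun h => ((hU p).1 h).2.2 hpB
  have hSv : v ∉ S := fun h => by simpa using hS h
  have hYv : v ∉ Y := fun h => by simpa using hY h
  have hS' : S ⊆ W \ P := fun u hu => by
    have := hS hu
    simp only [Finset.mem_sdiff, Finset.mem_erase] at this ⊢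
    tauto
  have hY' : Y ⊆ W \ P := fun u hu => by
    have := hY hu
    simp only [Finset.mem_sdiff, Finset.mem_erase] at this ⊢
    tauto
  have hfree : ∀ k, coeff k (ep (Ed G (W.erase v) P)) ≠ 0 → k v = 0 := by
    intro k hk
    refine ep_free _ (fun e he hve => ?_) hk
    simpa using Ed_mem_W he hve
  -- properties of exponents
  have hUB' : ∀ u ∈ U, u ∈ B' ∧ u ∉ P ∧ u ∈ W ∧ u ≠ v ∧ u ∉ B := by
    intro u hu
    have h1 := (hU u).1 hu
    have h2 : u ≠ v := fun h => hvU (h ▸ hu)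
    exact ⟨hB' u h1.1 h2 (Or.inr h1.2.1), fun h => h1.2.2 (hPB h), h1.1, h2, h1.2.2⟩
  -- multiplying by the factor of `p`
  have hmulp : ∀ (F : MvPolynomial V ℚ) (k : V →₀ ℕ), k p = 0 → coeff k F ≠ 0 →
      coeff (k + Finsupp.single v 1) (F * fac s(v, p)) ≠ 0 := by
    intro F k hk hF
    rw [coeff_mul_fac_ne, coeff_mul_X, coeff_mul_X_zero, sub_zero]
    · exact hF
    · simp [hk, hvp.ne]
  have hmp : m p = 0 := hm0 p hp
  have hindp : ind U p = 0 := by simp [ind_apply, hpU]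
  -- conclusion when nothing changes
  have fin1 : ∀ k : ℕ, k ≤ 2 →
      coeff (m + ind U + Finsupp.single v k) (ep (Ed G W P)) ≠ 0 → Good G W B P := by
    intro k hk hne
    refine ⟨S, Y, _, hS', hY', hSY, hc, hne, ?_, ?_, ?_, ?_⟩
    · intro u hu
      have h1 : u ∉ U := fun h => (hUB' u h).2.1 hu
      have h2 : u ≠ v := fun h => hvP (h ▸ hu)
      simp [ind_apply, h1, h2, hm0 u hu]
    · intro u hu
      have h1 : u ∉ U := fun h => hu (hUB' u h).2.2.1
      have h2 : u ≠ v := fun h => hu (h ▸ hvW)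
      simp [ind_apply, h1, h2, hmW u (by simp [hu])]
    · intro u hu huP
      have h1 : u ∉ U := fun h => (hUB' u h).2.2.2.2 hu
      by_cases h2 : u = v
      · subst h2
        simp [ind_apply, h1, hmv, hk, hYv]
      · have := hmB u (hB' u (hBW hu) h2 (Or.inl hu)) huP
        simpa [ind_apply, h1, h2] using this
    · intro u
      by_cases h1 : u ∈ U
      · have h3 := hUB' u h1
        have := (hmB u h3.1 h3.2.1).1
        simp [ind_apply, h1, h3]
        omega
      · by_cases h2 : u = v
        · subst h2
          simp [ind_apply, h1, hmv]
          omega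
        · simpa [ind_apply, h1, h2] using hmV u
  by_cases hw : ∃ w ∈ B, G.Adj v w ∧ w ≠ p
  · obtain ⟨w, hwB, hvw, hwp⟩ := hw
    have hwU : w ∉ U := fun h => (hUB' w h).2.2.2.2 hwB
    have hnb : nb G v W P = insert p (insert w U) := by
      ext u
      rw [mem_nb, Finset.mem_insert, Finset.mem_insert, hU]
      constructor
      · rintro ⟨h1, h2, -⟩
        by_cases h3 : u ∈ B
        · by_cases h4 : u = p
          · exact Or.inl h4
          · exact Or.inr (Or.inl (hN u h3 w hwB h2 hvw h4 hwp))
        · exact Or.inr (Or.inr ⟨h1, h2, h3⟩)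
      · rintro (rfl | rfl | ⟨h1, h2, h3⟩)
        · exact ⟨hBW hpB, hvp, by simp [hvP]⟩
        · exact ⟨hBW hwB, hvw, by simp [hvP]⟩
        · exact ⟨h1, h2, by simp [hvP]⟩
    have hep : ep (Ed G W P) = (ep (Ed G (W.erase v) P) * fac s(v, w) *
        ∏ u ∈ U, fac s(v, u)) * fac s(v, p) := by
      rw [ep_split hvW, hPv, hnb, Finset.prod_insert (by simp [hwp.symm, hpU]),
        Finset.prod_insert hwU]
      ring
    rcases coeff_star_two (ep (Ed G (W.erase v) P)) v w U hvU hvw.ne.symm m hmv hfree hm with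
      h1 | ⟨u0, hu0, hcoe⟩
    · refine fin1 2 le_rfl ?_
      have := hmulp _ _ (by simp [hmp, hindp, hvp.ne]) h1
      rw [hep]
      rwa [add_assoc, ← Finsupp.single_add] at this
    · have h3 := hUB' u0 hu0
      have h4 := (coeff_star _ v U hvU _ (by simp [hmv, h3.2.2.2.1])).2 hcoe
      have hu0p : u0 ≠ p := fun h => hpU (h ▸ hu0)
      have h5 := hmulp _ _ (by simp [hmp, hindp, hu0p]) h4
      rw [← hep] at h5
      obtain ⟨S1, Y1, hS1, hY1, hSY1, hc1, hu01, hSS, hYY⟩ : ∃ S1 Y1 : Finset V,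
          S1 ⊆ W \ P ∧ Y1 ⊆ W \ P ∧ Disjoint S1 Y1 ∧ S1.card ≤ Y1.card ∧
          (u0 ∈ S1 ∨ u0 ∈ Y) ∧ S ⊆ S1 ∧ (∀ u ∈ Y1, u ∈ Y ∨ u = v) := by
        by_cases hu : u0 ∈ S ∨ u0 ∈ Y
        · exact ⟨S, Y, hS', hY', hSY, hc, hu, Finset.Subset.refl _, fun u hu => Or.inl hu⟩
        · rw [not_or] at hu
          refine ⟨insert u0 S, insert v Y, ?_, ?_, ?_, ?_, ?_, ?_, ?_⟩
          · rw [Finset.insert_subset_iff]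
            exact ⟨by simp [h3], hS'⟩
          · rw [Finset.insert_subset_iff]
            exact ⟨by simp [hvW, hvP], hY'⟩
          · simp [h3.2.2.2.1.symm, hu.2, hSv, hSY]
          · rw [Finset.card_insert_of_notMem hu.1, Finset.card_insert_of_notMem hYv]
            omega
          · simp
          · simp
          · intro u hu
            rw [Finset.mem_insert] at hu
            tauto
      refine ⟨S1, Y1, _, hS1, hY1, hSY1, hc1, h5, ?_, ?_, ?_, ?_⟩
      · intro u hu
        have h1 : u ∉ U := fun h => (hUB' u h).2.1 hu
        have h2 : u ≠ v := fun h => hvP (h ▸ hu)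
        have h6 : u ≠ u0 := fun h => h1 (h ▸ hu0)
        simp [ind_apply, h1, h2, h6, hm0 u hu]
      · intro u hu
        have h1 : u ∉ U := fun h => hu (hUB' u h).2.2.1
        have h2 : u ≠ v := fun h => hu (h ▸ hvW)
        have h6 : u ≠ u0 := fun h => h1 (h ▸ hu0)
        simp [ind_apply, h1, h2, h6, hmW u (by simp [hu])]
      · intro u hu huP
        have h1 : u ∉ U := fun h => (hUB' u h).2.2.2.2 hu
        have h6 : u ≠ u0 := fun h => h1 (h ▸ hu0)
        by_cases h2 : u = v
        · subst h2
          simp [ind_apply, h1, hmv, h6]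
        · have := hmB u (hB' u (hBW hu) h2 (Or.inl hu)) huP
          have h7 := hYY u
          simp only [h2, or_false] at h7
          simp [ind_apply, h1, h2, h6]
          tauto
      · intro u
        by_cases h1 : u ∈ U
        · have h3 := hUB' u h1
          have h8 := hmB u h3.1 h3.2.1
          by_cases h6 : u = u0
          · subst h6
            simp [ind_apply, h1, h3]
            refine ⟨by omega, fun h => ?_⟩
            have := h8.2 (hu01.resolve_left h)
            omega
          · simp [ind_apply, h1, h3, h6]
            omega
        · have h6 : u ≠ u0 := fun h => h1 (h ▸ hu0)
          by_cases h2 : u = v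
          · subst h2
            simp [ind_apply, h1, hmv, h6]
          · have := hmV u
            simp [ind_apply, h1, h2, h6]
            exact ⟨this.1, fun h => this.2 (fun h' => h (hSS h'))⟩
  · push Not at hw
    have hnb : nb G v W P = insert p U := by
      ext u
      rw [mem_nb, Finset.mem_insert, hU]
      constructor
      · rintro ⟨h1, h2, -⟩
        by_cases h3 : u ∈ B
        · exact Or.inl (hw u h3 h2)
        · exact Or.inr ⟨h1, h2, h3⟩
      · rintro (rfl | ⟨h1, h2, h3⟩)
        · exact ⟨hBW hpB, hvp, by simp [hvP]⟩
        · exact ⟨h1, h2, by simp [hvP]⟩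
    refine fin1 1 (by norm_num) ?_
    rw [ep_split hvW, hPv, hnb, Finset.prod_insert hpU, mul_comm (fac _), ← mul_assoc]
    refine hmulp _ _ (by simp [hmp, hindp]) ?_
    exact (coeff_star _ v U hvU _ hmv).2 hm

lemma Ed_glue {P C D T : Finset V} (hCD : Disjoint C D) (hCT : Disjoint C T)
    (hPD : P ⊆ D ∪ T) (hE : ∀ c ∈ C, ∀ d ∈ D, ¬ G.Adj c d) :
    Ed G (C ∪ D ∪ T) P = Ed G (D ∪ T) P ∪ Ed G (C ∪ T) T := by
  ext e
  induction e using Sym2.ind with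
  | _ a b =>
    rw [Finset.mem_union, mem_Ed, mem_Ed, mem_Ed]
    by_cases hab : G.Adj a b
    swap
    · simp [hab]
    have e1 : a ∈ C → b ∉ D := fun h h' => hE a h b h' hab
    have e2 : b ∈ C → a ∉ D := fun h h' => hE b h a h' hab.symm
    have e3 := @hPD a
    have e4 := @hPD b
    have e5 : a ∈ C → a ∉ D := fun h => Finset.disjoint_left.1 hCD h
    have e6 : b ∈ C → b ∉ D := fun h => Finset.disjoint_left.1 hCD h
    have e7 : a ∈ C → a ∉ T := fun h => Finset.disjoint_left.1 hCT h
    have e8 : b ∈ C → b ∉ T := fun h => Finset.disjoint_left.1 hCT h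
    simp only [Finset.mem_union] at e3 e4 ⊢
    simp only [hab, true_and]
    clear hCD hCT hPD hE hab
    grind

lemma good_glue {W B P C D T : Finset V} (hCD : Disjoint C D) (hCT : Disjoint C T)
    (hW : W = C ∪ D ∪ T)
    (hPD : P ⊆ D ∪ T) (hE : ∀ c ∈ C, ∀ d ∈ D, ¬ G.Adj c d)
    (h1 : Good G (D ∪ T) (B ∩ (D ∪ T)) P) (h2 : Good G (C ∪ T) (B ∩ (C ∪ T)) T)
    (hBW : B ⊆ W) : Good G W B P := by
  obtain ⟨S1, Y1, m1, hS1, hY1, hSY1, hc1, hm1, hm01, hmW1, hmB1, hmV1⟩ := h1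
  obtain ⟨S2, Y2, m2, hS2, hY2, hSY2, hc2, hm2, hm02, hmW2, hmB2, hmV2⟩ := h2
  have hCD' := fun u (hu : u ∈ C) => Finset.disjoint_left.1 hCD hu
  have hCT' := fun u (hu : u ∈ C) => Finset.disjoint_left.1 hCT hu
  have hPD' := fun u => @hPD u
  have hS1' := fun u => @hS1 u
  have hY1' := fun u => @hY1 u
  have hS2' := fun u => @hS2 u
  have hY2' := fun u => @hY2 u
  have hBW' := fun u => @hBW u
  subst hW
  have hEd := Ed_glue hCD hCT hPD hE
  simp only [Finset.mem_union, Finset.mem_sdiff, Finset.mem_inter] at *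
  have hC1 : ∀ u ∈ C, m1 u = 0 := fun u hu => hmW1 u (by
    have := hCD' u hu; have := hCT' u hu; grind)
  have hC2 : ∀ u, u ∉ C → m2 u = 0 := fun u hu => by
    by_cases h : u ∈ T
    · exact hm02 u h
    · exact hmW2 u (by grind)
  have hdis : Disjoint (Ed G (D ∪ T) P) (Ed G (C ∪ T) T) := by
    rw [Finset.disjoint_left]
    intro e
    induction e using Sym2.ind with
    | _ a b =>
      rw [mem_Ed, mem_Ed]
      simp only [Finset.mem_union]
      have e5 := hCD' a
      have e6 := hCD' b
      have e7 := hCT' a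
      have e8 := hCT' b
      grind
  refine ⟨S1 ∪ S2, Y1 ∪ Y2, m1 + m2, ?_, ?_, ?_, ?_, ?_, ?_, ?_, ?_, ?_⟩
  · intro u
    have := hS1' u; have := hS2' u; have := hPD' u; have := hCD' u
    simp only [Finset.mem_union, Finset.mem_sdiff]
    grind
  · intro u
    have := hY1' u; have := hY2' u; have := hPD' u; have := hCD' u
    simp only [Finset.mem_union, Finset.mem_sdiff]
    grind
  · rw [Finset.disjoint_left] at hSY1 hSY2 ⊢
    intro u
    have := hY1' u; have := hY2' u; have := hS1' u; have := hS2' u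
    have := hCD' u; have := hCT' u; have := @hSY1 u; have := @hSY2 u
    simp only [Finset.mem_union]
    grind
  · have hYd : Disjoint Y1 Y2 := by
      rw [Finset.disjoint_left]
      intro u
      have := hY1' u; have := hY2' u; have := hCD' u; have := hCT' u
      grind
    rw [Finset.card_union_of_disjoint hYd]
    have := Finset.card_union_le S1 S2
    omega
  · rw [hEd]
    refine coeff_glue _ _ hdis _ _ hm1 hm2 ?_
    intro u
    by_cases hu : u ∈ C
    · left
      intro e he hue
      have := Ed_mem_W he hue
      have := hCD' u; have := hCT' u
      rw [Finset.mem_union] at *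
      grind
    · exact Or.inr (Or.inr (hC2 u hu))
  · intro u hu
    have h : u ∉ C := fun h => by
      have := hCD' u; have := hCT' u; have := hPD' u
      grind
    simp [hm01 u hu, hC2 u h]
  · intro u hu
    simp [hmW1 u (by grind), hmW2 u (by grind)]
  · intro u hu huP
    have := hY1' u; have := hY2' u; have := hCD' u; have := hCT' u
    by_cases h : u ∈ C
    · have h2 := hmB2 u ⟨hu, Or.inl h⟩ (hCT' u h)
      simp only [Finsupp.add_apply, hC1 u h, zero_add]
      grind
    · have h2 := hmB1 u ⟨hu, by have := hBW' u hu; grind⟩ huP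
      simp only [Finsupp.add_apply, hC2 u h, add_zero]
      grind
  · intro u
    by_cases h : u ∈ C
    · have h2 := hmV2 u
      simp only [Finsupp.add_apply, hC1 u h, zero_add]
      grind
    · have h2 := hmV1 u
      simp only [Finsupp.add_apply, hC2 u h, add_zero]
      grind

lemma Good.of_singleton {W B : Finset V} {p : V} (h : Good G W B {p}) :
    Good G W B ∅ := by
  obtain ⟨S, Y, m, hS, hY, hSY, hc, hm, hm0, hmW, hmB, hmV⟩ := h
  have hEd : Ed G W {p} = Ed G W ∅ := by
    ext e
    induction e using Sym2.ind with
    | _ a b =>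
      rw [mem_Ed, mem_Ed]
      simp only [Finset.mem_singleton, Finset.notMem_empty, false_and, not_false_eq_true,
        and_true]
      constructor
      · rintro ⟨h1, h2, -⟩
        exact ⟨h1, h2⟩
      · rintro ⟨h1, h2⟩
        refine ⟨h1, h2, ?_⟩
        rintro ⟨rfl, rfl⟩
        exact h1.ne rfl
  refine ⟨S, Y, m, ?_, ?_, hSY, hc, hEd ▸ hm, by simp, hmW, ?_, hmV⟩
  · exact hS.trans (by simp)
  · exact hY.trans (by simp)
  · intro v hv _
    by_cases hvp : v = p
    · subst hvp
      simp [hm0 v (by simp)]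
    · exact hmB v hv (by simpa using hvp)

lemma bd_inter (A : Set V) {W T : Finset V} (hT : T ⊆ W) : bd G A T = bd G A W ∩ T := by
  ext u
  rw [Finset.mem_inter, mem_bd, mem_bd]
  have := @hT u
  tauto

/-- The main induction (a Thomassen-type argument). -/
theorem good_main (hG : G.IsPlanar) (n : ℕ) : ∀ (W : Finset V), W.card = n → ∀ (A : Set V),
    (G.induce A).Preconnected → (∀ a ∈ A, a ∉ W) → ∀ P : Finset V, P ⊆ bd G A W →
    P.card ≤ 2 → (∀ x ∈ P, ∀ y ∈ P, x ≠ y → G.Adj x y) → Good G W (bd G A W) P := by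
  induction n using Nat.strong_induction_on with
  | _ n ih =>
  intro W hWn A hA hAW
  -- induction hypothesis in a convenient form
  have ih' : ∀ (W' : Finset V), W'.card < W.card → ∀ (A : Set V),
    (G.induce A).Preconnected → (∀ a ∈ A, a ∉ W') → ∀ P : Finset V, P ⊆ bd G A W' →
    P.card ≤ 2 → (∀ x ∈ P, ∀ y ∈ P, x ≠ y → G.Adj x y) → Good G W' (bd G A W') P :=
    fun W' h => ih W'.card (hWn ▸ h) W' rfl
  have hBW : bd G A W ⊆ W := fun u hu => (mem_bd.1 hu).1
  have hmain : ∀ P : Finset V, P.Nonempty → P ⊆ bd G A W →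
      P.card ≤ 2 → (∀ x ∈ P, ∀ y ∈ P, x ≠ y → G.Adj x y) → Good G W (bd G A W) P := by
    rintro P ⟨p, hp⟩ hPB hP2 hPc
    -- enlarging `A` by a boundary vertex
    have hAv : ∀ v ∈ bd G A W, (G.induce (A ∪ {v})).Preconnected ∧
        (∀ a ∈ A ∪ {v}, a ∉ W.erase v) ∧
        (∀ u ∈ W, u ≠ v → (u ∈ bd G A W ∨ G.Adj v u) → u ∈ bd G (A ∪ {v}) (W.erase v)) := by
      intro v hv
      obtain ⟨hvW, a, ha, hav⟩ := mem_bd.1 hv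
      refine ⟨?_, ?_, ?_⟩
      · refine (SimpleGraph.connected_induce_union hA ?_ ha (Set.mem_singleton v) hav).preconnected
        exact SimpleGraph.Connected.preconnected (by simp)
      · rintro b (hb | hb)
        · exact fun h => hAW b hb (Finset.mem_of_mem_erase h)
        · rw [Set.mem_singleton_iff] at hb
          simp [hb]
      · intro u hu huv h
        rw [mem_bd, Finset.mem_erase]
        refine ⟨⟨huv, hu⟩, ?_⟩
        rcases h with h | h
        · obtain ⟨-, b, hb, hbu⟩ := mem_bd.1 h
          exact ⟨b, Or.inl hb, hbu⟩
        · exact ⟨v, Or.inr rfl, h⟩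
    have hpB := hPB hp
    by_cases hv : ∃ v ∈ bd G A W, G.Adj p v ∧ v ∉ P
    swap
    · push Not at hv
      obtain ⟨k1, k2, k3⟩ := hAv p hpB
      refine good_delP hp (hPB.trans hBW) k3 hv hBW ?_
      refine ih' _ (Finset.card_erase_lt_of_mem (hBW hpB)) _ k1 k2 _ ?_ ?_ ?_
      · intro u hu
        rw [Finset.mem_erase] at hu
        exact k3 u (hBW (hPB hu.2)) hu.1 (Or.inl (hPB hu.2))
      · exact (Finset.card_le_card (Finset.erase_subset _ _)).trans hP2
      · intro x hx y hy
        exact hPc x (Finset.mem_of_mem_erase hx) y (Finset.mem_of_mem_erase hy)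
    obtain ⟨v, hvB, hpv, hvP⟩ := hv
    have hvW := hBW hvB
    by_cases hN : ∀ x ∈ bd G A W, ∀ y ∈ bd G A W, G.Adj v x → G.Adj v y → x ≠ p → y ≠ p → x = y
    · obtain ⟨k1, k2, k3⟩ := hAv v hvB
      refine good_delV hp hPB hBW hvB hvP hpv.symm k3 hN ?_
      refine ih' _ (Finset.card_erase_lt_of_mem hvW) _ k1 k2 _ ?_ hP2 hPc
      intro u hu
      exact k3 u (hBW (hPB hu)) (fun h => hvP (h ▸ hu)) (Or.inl (hPB hu))
    push Not at hN
    obtain ⟨x, hxB, y, hyB, hvx, hvy, hxp, hyp, hxy⟩ := hN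
    -- using a separation
    have hsep1 : ∀ z ∈ bd G A W, G.Adj v z → ∀ C D : Finset V, Disjoint C D →
        C ∪ D = (W.erase v).erase z → C.Nonempty → D.Nonempty →
        (∀ c ∈ C, ∀ d ∈ D, ¬ G.Adj c d) → P ⊆ D ∪ {v, z} → Good G W (bd G A W) P := by
      intro z hzB hvz C D hCD hU hC hD hE hPD
      have hzW := hBW hzB
      have hU' : ∀ u, (u ∈ C ∨ u ∈ D) ↔ (u ≠ z ∧ u ≠ v ∧ u ∈ W) := by
        intro u
        rw [← Finset.mem_union, hU, Finset.mem_erase, Finset.mem_erase]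
      have hvCD : ¬ (v ∈ C ∨ v ∈ D) := by rw [hU']; tauto
      have hzCD : ¬ (z ∈ C ∨ z ∈ D) := by rw [hU']; tauto
      rw [not_or] at hvCD hzCD
      have hWeq : W = C ∪ D ∪ {v, z} := by
        ext u
        simp only [Finset.mem_union, hU', Finset.mem_insert, Finset.mem_singleton]
        by_cases h1 : u = v
        · simp [h1, hvW]
        by_cases h2 : u = z
        · simp [h2, hzW]
        simp [h1, h2]
      have s1 : D ∪ {v, z} ⊆ W := by
        rw [hWeq]; intro u; simp only [Finset.mem_union]; tauto
      have s2 : C ∪ {v, z} ⊆ W := by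
        rw [hWeq]; intro u; simp only [Finset.mem_union]; tauto
      have hCD' := fun u (hu : u ∈ C) => Finset.disjoint_left.1 hCD hu
      have l1 : (D ∪ {v, z}).card < W.card := by
        obtain ⟨c, hc⟩ := hC
        refine Finset.card_lt_card (Finset.ssubset_iff_subset_ne.2 ⟨s1, fun h => ?_⟩)
        have hcW : c ∈ W := ((hU' c).1 (Or.inl hc)).2.2
        have hc' := (hU' c).1 (Or.inl hc)
        have := hCD' c hc
        rw [← h] at hcW
        simp [this, hc'.1, hc'.2.1] at hcW
      have l2 : (C ∪ {v, z}).card < W.card := by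
        obtain ⟨c, hc⟩ := hD
        refine Finset.card_lt_card (Finset.ssubset_iff_subset_ne.2 ⟨s2, fun h => ?_⟩)
        have hcW : c ∈ W := ((hU' c).1 (Or.inr hc)).2.2
        have hc' := (hU' c).1 (Or.inr hc)
        have : c ∉ C := fun h => hCD' c h hc
        rw [← h] at hcW
        simp [this, hc'.1, hc'.2.1] at hcW
      refine good_glue hCD (T := {v, z}) ?_ hWeq hPD hE ?_ ?_ hBW
      · simp [hvCD.1, hzCD.1]
      · rw [← bd_inter A s1]
        refine ih' _ l1 A hA (fun a ha h => hAW a ha (s1 h)) P ?_ hP2 hPc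
        rw [bd_inter A s1]
        exact Finset.subset_inter hPB hPD
      · rw [← bd_inter A s2]
        refine ih' _ l2 A hA (fun a ha h => hAW a ha (s2 h)) {v, z} ?_ Finset.card_le_two ?_
        · rw [bd_inter A s2]
          refine Finset.subset_inter ?_ Finset.subset_union_right
          intro u hu
          simp only [Finset.mem_insert, Finset.mem_singleton] at hu
          rcases hu with rfl | rfl
          · exact hvB
          · exact hzB
        · intro a ha b hb hab
          simp only [Finset.mem_insert, Finset.mem_singleton] at ha hb
          rcases ha with rfl | rfl <;> rcases hb with rfl | rfl
          · exact absurd rfl hab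
          · exact hvz
          · exact hvz.symm
          · exact absurd rfl hab
    have hsep : ∀ z ∈ bd G A W, G.Adj v z → ∀ a b, a ∈ W → b ∈ W → a ≠ v → b ≠ v → a ≠ z →
        b ≠ z → ¬ Linked G ((W.erase v).erase z) a b → Good G W (bd G A W) P := by
      intro z hzB hvz a b ha hb hav hbv haz hbz hl
      obtain ⟨C, D, hCD, hU, haC, hbD, hE⟩ := exists_split (by simp [*]) (by simp [*]) hl
      by_cases h : P ⊆ D ∪ {v, z}
      · exact hsep1 z hzB hvz C D hCD hU ⟨a, haC⟩ ⟨b, hbD⟩ hE h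
      · refine hsep1 z hzB hvz D C hCD.symm (by rw [Finset.union_comm, hU]) ⟨b, hbD⟩ ⟨a, haC⟩
          (fun d hd c hc h => hE c hc d hd h.symm) ?_
        have hU' : ∀ u, (u ∈ C ∨ u ∈ D) ↔ (u ≠ z ∧ u ≠ v ∧ u ∈ W) := by
          intro u
          rw [← Finset.mem_union, hU, Finset.mem_erase, Finset.mem_erase]
        rw [Finset.not_subset] at h
        obtain ⟨q, hqP, hq⟩ := h
        simp only [Finset.mem_union, Finset.mem_insert, Finset.mem_singleton, not_or] at hq
        have hqC : q ∈ C := by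
          have := (hU' q).2 ⟨hq.2.2, hq.2.1, hBW (hPB hqP)⟩
          tauto
        intro u hu
        simp only [Finset.mem_union, Finset.mem_insert, Finset.mem_singleton]
        by_contra hne
        push Not at hne
        have huD : u ∈ D := by
          have := (hU' u).2 ⟨hne.2.2, hne.2.1, hBW (hPB hu)⟩
          tauto
        have hqu : q ≠ u := fun h => hq.1 (h ▸ huD)
        exact hE q hqC u huD (hPc q hqP u hu hqu)
    by_contra hbad
    have hxW := hBW hxB
    have hyW := hBW hyB
    have hpW := hBW hpB
    refine exists_not_linked hG hA hAW hvW hpW hxW hyW hxp.symm hyp.symm hxy hpv.symm hvx hvy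
      (mem_bd.1 hvB).2 (mem_bd.1 hpB).2 (mem_bd.1 hxB).2 (mem_bd.1 hyB).2 ?_ ?_ ?_
    · by_contra hl
      exact hbad (hsep y hyB hvy p x hpW hxW hpv.ne hvx.ne.symm hyp.symm hxy hl)
    · by_contra hl
      exact hbad (hsep p hpB hpv.symm x y hxW hyW hvx.ne.symm hvy.ne.symm hxp hyp hl)
    · by_contra hl
      exact hbad (hsep x hxB hvx y p hyW hpW hvy.ne.symm hpv.ne hxy.symm hxp.symm hl)
  intro P hPB hP2 hPc
  rcases P.eq_empty_or_nonempty with rfl | hne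
  swap
  · exact hmain P hne hPB hP2 hPc
  rcases (bd G A W).eq_empty_or_nonempty with hB | ⟨p, hp⟩
  swap
  · refine (hmain {p} (by simp) (by simpa using hp) (by simp) ?_).of_singleton
    intro x hx y hy hxy
    simp only [Finset.mem_singleton] at hx hy
    exact absurd (hx.trans hy.symm) hxy
  rw [hB]
  rcases W.eq_empty_or_nonempty with rfl | ⟨v, hv⟩
  · refine ⟨∅, ∅, 0, by simp, by simp, by simp, by simp, ?_, by simp, by simp, by simp, by simp⟩
    have : Ed G (∅ : Finset V) ∅ = ∅ := by
      ext e
      induction e using Sym2.ind with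
      | _ a b => simp [mem_Ed]
    simp [this, ep]
  · refine Good.of_singleton (p := v) ?_
    refine good_delP (p := v) (B' := bd G {v} (W.erase v)) (by simp) (by simpa using hv) ?_ (by simp)
      (by simp) ?_
    · intro u hu huv h
      rw [mem_bd]
      refine ⟨by simp [hu, huv], v, rfl, by simpa using h⟩
    · rw [show ({v} : Finset V).erase v = ∅ by simp]
      refine ih' _ (Finset.card_erase_lt_of_mem hv) {v} ?_ (by simp) ∅ (by simp) (by simp)
        (by simp)
      exact SimpleGraph.Connected.preconnected (by simp)

end Main

/- Every planar graph has a vertex set `X` with `|X| < |V|/2` such that `G` is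
`L`-colourable whenever `L` gives five colours to vertices of `X` and four to the rest. -/
theorem stmt_14 {V : Type*} [Fintype V] [LinearOrder V] [Nonempty V]
    (G : SimpleGraph V) (hG : G.IsPlanar) :
    ∃ X : Finset V, 2 * X.card < Fintype.card V ∧
      ∀ L : V → Finset ℕ,
        (∀ v ∈ X, (L v).card = 5) → (∀ v ∉ X, (L v).card = 4) →
        ∃ φ : V → ℕ, (∀ v, φ v ∈ L v) ∧ ∀ u v, G.Adj u v → φ u ≠ φ v := by
  obtain ⟨v0⟩ := ‹Nonempty V›
  have hgood : Good G Finset.univ ∅ {v0} := by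
    refine good_delP (p := v0) (B' := bd G {v0} (Finset.univ.erase v0)) (by simp) (by simp) ?_ (by simp)
      (by simp) ?_
    · intro u hu huv h
      rw [mem_bd]
      refine ⟨by simp [huv], v0, rfl, by simpa using h⟩
    · rw [show ({v0} : Finset V).erase v0 = ∅ by simp]
      refine good_main hG _ _ rfl {v0} ?_ (by simp) ∅ (by simp) (by simp) (by simp)
      exact SimpleGraph.Connected.preconnected (by simp)
  obtain ⟨S, Y, m, hS, hY, hSY, hc, hm, hm0, hmW, hmB, hmV⟩ := hgood
  refine ⟨S, ?_, ?_⟩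
  · have h1 : (S ∪ Y).card ≤ (Finset.univ \ {v0} : Finset V).card :=
      Finset.card_le_card (Finset.union_subset hS hY)
    rw [Finset.card_union_of_disjoint hSY] at h1
    have h2 : (Finset.univ \ {v0} : Finset V).card < (Finset.univ : Finset V).card :=
      Finset.card_lt_card (Finset.ssubset_iff_subset_ne.2 ⟨Finset.subset_univ _, fun h => by
        have := Finset.mem_univ v0
        rw [← h] at this
        simp at this⟩)
    rw [Finset.card_univ] at h2
    omega
  · intro L hL5 hL4
    obtain ⟨s, hs, hne⟩ := combinatorial_nullstellensatz_exists_eval_nonzero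
      (ep (Ed G Finset.univ {v0})) m hm (by
        rw [(ep_homog _).totalDegree (fun h => hm (by rw [h]; simp)), ep_degree _ hm])
      (fun v => (L v).map Nat.castEmbedding) (by
        intro v
        rw [Finset.card_map]
        have := hmV v
        by_cases hv : v ∈ S
        · rw [hL5 v hv]; omega
        · rw [hL4 v hv]
          have := this.2 hv
          omega)
    simp only [Finset.mem_map, Nat.castEmbedding_apply] at hs
    choose φ hφ hφs using hs
    refine ⟨φ, hφ, ?_⟩
    intro u v huv huv'
    apply hne
    have he : s(u, v) ∈ Ed G Finset.univ {v0} := by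
      rw [mem_Ed]
      refine ⟨huv, by simp, ?_⟩
      rintro ⟨h1, h2⟩
      simp only [Finset.mem_singleton] at h1 h2
      exact huv.ne (h1.trans h2.symm)
    rw [ep, map_prod]
    refine Finset.prod_eq_zero he ?_
    have hsu : s u = s v := by rw [← hφs, ← hφs, huv']
    rcases fac_mk u v with h | h <;> simp [h, hsu]
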